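/- (Leibniz type rule for the Hilfer derivative.) Let 0 < α < 1, 0 < β ≤ 1, a < b, and set ξ := (1−β)(1−α). Suppose f, g : ℝ → ℝ are real-analytic with everywhere-convergent power series. Then for every x ∈ (a,b): (^{H}D^{α,β}(f·g))(x) = Σ_{m=0}^∞ binom(α, m) f⁽ᵐ⁾(x) (^{H}D^{α−m,β} g)(x) + Σ_{k=0}^∞ binom(−ξ, k) (I^{ξ+k}g)(a) (f⁽ᵏ⁾(x) − f⁽ᵏ⁾(a)) (x − a)^{−(α+ξ)} / Γ(β(1−α)), where f⁽ᵐ⁾ is the ordinary m-th derivative, (I^{γ}g)(a) := 0 for γ > 0 and := g(a) for γ = 0, all series converging. -/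

import Mathlib

open Real

/-- Generalized binomial coefficient `binom(γ, n) = γ(γ-1)⋯(γ-n+1)/n!`. -/
noncomputable def genBinom (γ : ℝ) (n : ℕ) : ℝ :=
  (∏ i ∈ Finset.range n, (γ - (i : ℝ))) / (n.factorial : ℝ)

/-- Ψ-Riemann–Liouville fractional integral of order `α` with base point `a`;
by convention the order-0 integral is the identity. -/
noncomputable def psiI (a : ℝ) (Ψ f : ℝ → ℝ) (α : ℝ) (x : ℝ) : ℝ :=
  if α = 0 then f x
  else (Real.Gamma α)⁻¹ * ∫ t in a..x, deriv Ψ t * (Ψ x - Ψ t) ^ (α - 1) * f t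

/-- Ψ-Riemann–Liouville fractional derivative of order `γ` (for `γ ≤ 0` it is the
fractional integral of order `-γ`, the order-0 case being the identity). -/
noncomputable def psiRLD (a : ℝ) (Ψ f : ℝ → ℝ) (γ : ℝ) (x : ℝ) : ℝ :=
  if γ ≤ 0 then psiI a Ψ f (-γ) x
  else (deriv Ψ x)⁻¹ * deriv (fun y => psiI a Ψ f (1 - γ) y) x

/-- Ψ-Caputo fractional derivative of order `γ` (for `γ ≤ 0` it is the
fractional integral of order `-γ`). -/
noncomputable def psiCD (a : ℝ) (Ψ f : ℝ → ℝ) (γ : ℝ) (x : ℝ) : ℝ :=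
  if γ ≤ 0 then psiI a Ψ f (-γ) x
  else psiI a Ψ (fun t => (deriv Ψ t)⁻¹ * deriv f t) (1 - γ) x

/-- Ψ-Hilfer fractional derivative of order `α` and type `β`. -/
noncomputable def psiHD (a : ℝ) (Ψ f : ℝ → ℝ) (α β : ℝ) (x : ℝ) : ℝ :=
  psiI a Ψ
    (fun y => (deriv Ψ y)⁻¹ * deriv (fun z => psiI a Ψ f ((1 - β) * (1 - α)) z) y)
    (β * (1 - α)) x

/-- Classical Riemann–Liouville fractional integral with base point `a`. -/
noncomputable def rlI (a : ℝ) (α : ℝ) (f : ℝ → ℝ) (x : ℝ) : ℝ :=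
  if α = 0 then f x
  else (Real.Gamma α)⁻¹ * ∫ t in a..x, (x - t) ^ (α - 1) * f t

/-- Classical Riemann–Liouville fractional derivative (fractional integral for `γ ≤ 0`). -/
noncomputable def rlD (a : ℝ) (γ : ℝ) (f : ℝ → ℝ) (x : ℝ) : ℝ :=
  if γ ≤ 0 then rlI a (-γ) f x
  else deriv (fun y => rlI a (1 - γ) f y) x

/-- Classical Caputo fractional derivative (fractional integral for `γ ≤ 0`). -/
noncomputable def capD (a : ℝ) (γ : ℝ) (f : ℝ → ℝ) (x : ℝ) : ℝ :=
  if γ ≤ 0 then rlI a (-γ) f x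
  else rlI a (1 - γ) (deriv f) x

/-- Classical Hilfer fractional derivative of order `α` and type `β`. -/
noncomputable def hilD (a : ℝ) (α β : ℝ) (f : ℝ → ℝ) (x : ℝ) : ℝ :=
  rlI a (β * (1 - α))
    (fun y => deriv (fun z => rlI a ((1 - β) * (1 - α)) f z) y) x

/-- Hadamard fractional integral with base point `a`. -/
noncomputable def hadI (a : ℝ) (α : ℝ) (f : ℝ → ℝ) (x : ℝ) : ℝ :=
  if α = 0 then f x
  else (Real.Gamma α)⁻¹ * ∫ t in a..x, (Real.log x - Real.log t) ^ (α - 1) * f t / t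

/-- Caputo–Hadamard fractional derivative (Hadamard fractional integral for `γ ≤ 0`). -/
noncomputable def chD (a : ℝ) (γ : ℝ) (f : ℝ → ℝ) (x : ℝ) : ℝ :=
  if γ ≤ 0 then hadI a (-γ) f x
  else hadI a (1 - γ) (fun t => t * deriv f t) x

/-- `h` is real-analytic with a power series converging on all of `ℝ`. -/
def EntireReal (h : ℝ → ℝ) : Prop :=
  ∃ p : FormalMultilinearSeries ℝ ℝ ℝ, HasFPowerSeriesOnBall h p 0 ⊤

/-!
Write `ξ = (1 - β)(1 - α)` and `η = β(1 - α)`. The semigroup law `I^η I^ξ = I^(1-α)` shows that the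
Hilfer derivative is the Riemann–Liouville derivative minus the boundary term
`(I^ξ f)(a) (x - a)^(η-1) / Γ(η)`, so only the Riemann–Liouville derivative needs a Leibniz series.

For that one, split `f t = f x + (t - x) h t` with `h` the difference quotient of `f` at `x`. Since
`I^p((t - x) h g)(y) = (y - x) I^p(h g)(y) - p I^(p+1)(h g)(y)`, differentiating at `y = x` gives
`(1 - p) I^p(h g)(x)` without differentiating `h` or `g`. Expanding `h` in its Taylor series at `x`
and integrating termwise, `I^p((t - x)^m g)(x) = binom(-p, m) m! I^(p+m) g(x)` yields the series.
-/

section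

open MeasureTheory Set

variable {a b p q x y : ℝ} {d f g u v : ℝ → ℝ}

/-! ### Beta integrals and Fubini on a triangle -/

theorem integral_sub_rpow_mul_rpow (hp : 0 < p) (hq : 0 < q) (hx : 0 < x) :
    ∫ t in (0 : ℝ)..x, (x - t) ^ (p - 1) * t ^ (q - 1) =
      Gamma p * Gamma q / Gamma (p + q) * x ^ (p + q - 1) := by
  have hbeta := Complex.betaIntegral_scaled q p hx
  rw [Complex.betaIntegral_eq_Gamma_mul_div _ _ (by simpa) (by simpa)] at hbeta
  have hreal : ∫ t in (0 : ℝ)..x, (t : ℂ) ^ ((q : ℂ) - 1) * ((x : ℂ) - t) ^ ((p : ℂ) - 1) =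
      ∫ t in (0 : ℝ)..x, (((x - t) ^ (p - 1) * t ^ (q - 1) : ℝ) : ℂ) := by
    refine intervalIntegral.integral_congr fun t ht => ?_
    rw [uIcc_of_le hx.le] at ht
    simp only [Complex.ofReal_mul, Complex.ofReal_cpow (sub_nonneg.2 ht.2),
      Complex.ofReal_cpow ht.1]
    push_cast
    ring
  rw [hreal, intervalIntegral.integral_ofReal] at hbeta
  simp only [← Complex.ofReal_add, Complex.Gamma_ofReal, ← Complex.ofReal_one,
    ← Complex.ofReal_sub, ← Complex.ofReal_cpow hx.le] at hbeta
  norm_cast at hbeta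
  rw [hbeta, add_comm q p]
  ring

theorem integral_sub_rpow_mul_sub_rpow (hp : 0 < p) (hq : 0 < q) (hax : a < x) :
    ∫ t in a..x, (x - t) ^ (p - 1) * (t - a) ^ (q - 1) =
      Gamma p * Gamma q / Gamma (p + q) * (x - a) ^ (p + q - 1) := by
  have hshift := intervalIntegral.integral_comp_sub_right (a := a) (b := x)
    (fun t => (x - a - t) ^ (p - 1) * t ^ (q - 1)) a
  simpa only [sub_sub_sub_cancel_right, sub_self,
    integral_sub_rpow_mul_rpow hp hq (sub_pos.2 hax)] using hshift

theorem intervalIntegrable_sub_rpow_mul_sub_rpow (hp : 0 < p) (hq : 0 < q) (hax : a < x) :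
    IntervalIntegrable (fun t => (x - t) ^ (p - 1) * (t - a) ^ (q - 1)) volume a x := by
  -- An integral with a nonzero value cannot be a junk value.
  apply intervalIntegral.intervalIntegrable_of_integral_ne_zero
  rw [integral_sub_rpow_mul_sub_rpow hp hq hax]
  have := Gamma_pos_of_pos hp
  have := Gamma_pos_of_pos hq
  have := Gamma_pos_of_pos (add_pos hp hq)
  have := sub_pos.2 hax
  positivity

theorem intervalIntegrable_sub_rpow (hp : 0 < p) :
    IntervalIntegrable (fun t => (x - t) ^ (p - 1)) volume a x := by
  simpa using (intervalIntegral.intervalIntegrable_rpow' (a := x - a) (b := x - x)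
    (by linarith : -1 < p - 1)).comp_sub_left x

theorem intervalIntegrable_sub_rpow_mul (hp : 0 < p) (hax : a ≤ x)
    (hd : ContinuousOn d (Icc a x)) :
    IntervalIntegrable (fun t => (x - t) ^ (p - 1) * d t) volume a x :=
  (intervalIntegrable_sub_rpow hp).mul_continuousOn (by rwa [uIcc_of_le hax])

theorem integral_integral_swap_triangle {F : ℝ → ℝ → ℝ} (hab : a ≤ b)
    (hF : IntegrableOn (Function.uncurry F) {z | z.2 < z.1}
      ((volume.restrict (Ioc a b)).prod (volume.restrict (Ioc a b)))) :
    ∫ s in a..b, ∫ t in a..s, F s t = ∫ t in a..b, ∫ s in t..b, F s t := by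
  have htri : MeasurableSet {z : ℝ × ℝ | z.2 < z.1} :=
    measurableSet_lt measurable_snd measurable_fst
  have hswap := integral_integral_swap
    (f := fun s t => {z : ℝ × ℝ | z.2 < z.1}.indicator (Function.uncurry F) (s, t))
    ((integrable_indicator_iff htri).2 hF)
  rw [intervalIntegral.integral_of_le hab, intervalIntegral.integral_of_le hab]
  refine Eq.trans ?_ (hswap.trans ?_)
  · refine setIntegral_congr_fun measurableSet_Ioc fun s hs => ?_
    have hfiber : Iio s ∩ Ioc a b = Ioo a s :=
      Set.ext fun t => ⟨fun h => ⟨h.2.1, h.1⟩, fun h => ⟨h.2, h.1, h.2.le.trans hs.2⟩⟩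
    change _ = ∫ t in Ioc a b, (Iio s).indicator (F s) t
    rw [integral_indicator measurableSet_Iio, Measure.restrict_restrict measurableSet_Iio, hfiber,
      intervalIntegral.integral_of_le hs.1.le, integral_Ioc_eq_integral_Ioo]
  · refine setIntegral_congr_fun measurableSet_Ioc fun t ht => ?_
    have hfiber : Ioi t ∩ Ioc a b = Ioc t b := by
      rw [inter_comm, Ioc_inter_Ioi, sup_eq_right.2 ht.1.le]
    change ∫ s in Ioc a b, (Ioi t).indicator (F · t) s = _
    rw [integral_indicator measurableSet_Ioi, Measure.restrict_restrict measurableSet_Ioi, hfiber,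
      intervalIntegral.integral_of_le ht.2]

theorem integrableOn_triangle_sub_rpow_mul_sub_rpow_mul (hp : 0 < p) (hq : 0 < q) (hax : a ≤ x)
    (hd : ContinuousOn d (Icc a x)) :
    IntegrableOn (fun z : ℝ × ℝ => (x - z.1) ^ (p - 1) * (z.1 - z.2) ^ (q - 1) * d z.2)
      {z | z.2 < z.1} ((volume.restrict (Ioc a x)).prod (volume.restrict (Ioc a x))) := by
  have htri : MeasurableSet {z : ℝ × ℝ | z.2 < z.1} :=
    measurableSet_lt measurable_snd measurable_fst
  have hmeas : AEStronglyMeasurable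
      (fun z : ℝ × ℝ => (x - z.1) ^ (p - 1) * (z.1 - z.2) ^ (q - 1) * d z.2)
      ((volume.restrict (Ioc a x)).prod (volume.restrict (Ioc a x))) :=
    (by fun_prop : Measurable fun z : ℝ × ℝ =>
      (x - z.1) ^ (p - 1) * (z.1 - z.2) ^ (q - 1)).aestronglyMeasurable.mul
      ((hd.mono Ioc_subset_Icc_self).aestronglyMeasurable measurableSet_Ioc).comp_snd
  have hinterior : ∀ᵐ t ∂volume.restrict (Ioc a x), t ∈ Ioo a x :=
    restrict_Ioo_eq_restrict_Ioc (μ := volume) (a := a) (b := x) ▸ ae_restrict_mem measurableSet_Ioo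
  have hfiber : ∀ t ∈ Ioo a x, Ioi t ∩ Ioc a x = Ioc t x := fun t ht => by
    rw [inter_comm, Ioc_inter_Ioi, sup_eq_right.2 ht.1.le]
  rw [← integrable_indicator_iff htri, integrable_prod_iff' (hmeas.indicator htri)]
  constructor
  · filter_upwards [hinterior] with t ht
    change Integrable ((Ioi t).indicator
      fun s => (x - s) ^ (p - 1) * (s - t) ^ (q - 1) * d t) _
    rw [integrable_indicator_iff measurableSet_Ioi, IntegrableOn,
      Measure.restrict_restrict measurableSet_Ioi, hfiber t ht]
    exact ((intervalIntegrable_sub_rpow_mul_sub_rpow hp hq ht.2).mul_const (d t)).1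
  · have hbound := (intervalIntegrable_sub_rpow_mul (add_pos hp hq) hax hd.abs).const_mul
      (Gamma p * Gamma q / Gamma (p + q))
    refine hbound.1.congr ?_
    filter_upwards [hinterior] with t ht
    rw [← mul_assoc, ← integral_sub_rpow_mul_sub_rpow hp hq ht.2,
      ← intervalIntegral.integral_mul_const, intervalIntegral.integral_of_le ht.2.le,
      ← hfiber t ht, ← Measure.restrict_restrict measurableSet_Ioi,
      ← integral_indicator measurableSet_Ioi]
    refine setIntegral_congr_fun measurableSet_Ioc fun s hs => ?_
    by_cases hts : t < s
    · have hxs := sub_nonneg.2 hs.2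
      have hst := sub_pos.2 hts
      simp [hts, abs_of_nonneg (rpow_nonneg hxs _), abs_of_nonneg (rpow_nonneg hst.le _)]
    · simp [hts]

/-! ### Algebra of Riemann–Liouville integrals -/

theorem rlI_zero_order : rlI a 0 f = f := by
  funext x
  simp [rlI]

theorem rlI_of_ne_zero (hp : p ≠ 0) :
    rlI a p f x = (Gamma p)⁻¹ * ∫ t in a..x, (x - t) ^ (p - 1) * f t :=
  if_neg hp

theorem rlI_one : rlI a 1 f x = ∫ t in a..x, f t := by
  simp [rlI]

theorem rlI_base (hp : p ≠ 0) : rlI a p f a = 0 := by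
  simp [rlI_of_ne_zero hp]

theorem rlI_congr (hax : a < x) (h : EqOn u v (Ioc a x)) : rlI a p u x = rlI a p v x := by
  rcases eq_or_ne p 0 with rfl | hp
  · simpa only [rlI_zero_order] using h ⟨hax, le_rfl⟩
  · rw [rlI_of_ne_zero hp, rlI_of_ne_zero hp, intervalIntegral.integral_of_le hax.le,
      intervalIntegral.integral_of_le hax.le]
    congr 1
    exact setIntegral_congr_fun measurableSet_Ioc fun t ht => by simp only [h ht]

theorem rlI_const_mul (c : ℝ) : rlI a p (fun t => c * f t) x = c * rlI a p f x := by
  rcases eq_or_ne p 0 with rfl | hp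
  · simp only [rlI_zero_order]
  · simp only [rlI_of_ne_zero hp, mul_left_comm _ c, intervalIntegral.integral_const_mul]

theorem rlI_add (hu : IntervalIntegrable (fun t => (x - t) ^ (p - 1) * u t) volume a x)
    (hv : IntervalIntegrable (fun t => (x - t) ^ (p - 1) * v t) volume a x) :
    rlI a p (fun t => u t + v t) x = rlI a p u x + rlI a p v x := by
  rcases eq_or_ne p 0 with rfl | hp
  · simp only [rlI_zero_order]
  · simp only [rlI_of_ne_zero hp, mul_add, intervalIntegral.integral_add hu hv]

theorem rlI_mul_base : rlI a p (fun t => f t * g t) a = f a * rlI a p g a := by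
  rcases eq_or_ne p 0 with rfl | hp
  · simp only [rlI_zero_order]
  · simp only [rlI_base hp, mul_zero]

theorem rlI_sub_rpow (hp : 0 ≤ p) (hq : 0 < q) (hax : a < x) :
    rlI a p (fun t => (t - a) ^ (q - 1) / Gamma q) x = (x - a) ^ (p + q - 1) / Gamma (p + q) := by
  rcases hp.eq_or_lt with rfl | hp
  · simp only [rlI_zero_order, zero_add]
  · have := (Gamma_pos_of_pos hp).ne'
    have := (Gamma_pos_of_pos hq).ne'
    simp only [rlI_of_ne_zero hp.ne', ← mul_div_assoc, intervalIntegral.integral_div,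
      integral_sub_rpow_mul_sub_rpow hp hq hax]
    field_simp

theorem rlI_rlI (hp : 0 ≤ p) (hq : 0 ≤ q) (hax : a ≤ x) (hd : ContinuousOn d (Icc a x)) :
    rlI a p (rlI a q d) x = rlI a (p + q) d x := by
  rcases hp.eq_or_lt with rfl | hp
  · rw [rlI_zero_order, zero_add]
  rcases hq.eq_or_lt with rfl | hq
  · rw [rlI_zero_order, add_zero]
  have hbeta : ∫ s in a..x, ∫ t in a..s, (x - s) ^ (p - 1) * (s - t) ^ (q - 1) * d t =
      Gamma p * Gamma q / Gamma (p + q) * ∫ t in a..x, (x - t) ^ (p + q - 1) * d t := by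
    rw [integral_integral_swap_triangle
        (F := fun s t => (x - s) ^ (p - 1) * (s - t) ^ (q - 1) * d t) hax
        (integrableOn_triangle_sub_rpow_mul_sub_rpow_mul hp hq hax hd),
      ← intervalIntegral.integral_const_mul, intervalIntegral.integral_of_le hax,
      intervalIntegral.integral_of_le hax, integral_Ioc_eq_integral_Ioo,
      integral_Ioc_eq_integral_Ioo]
    refine setIntegral_congr_fun measurableSet_Ioo fun t ht => ?_
    simp only [intervalIntegral.integral_mul_const, integral_sub_rpow_mul_sub_rpow hp hq ht.2]
    ring
  have := (Gamma_pos_of_pos hp).ne'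
  have := (Gamma_pos_of_pos hq).ne'
  calc rlI a p (rlI a q d) x
      = (Gamma p)⁻¹ * (Gamma q)⁻¹ *
          ∫ s in a..x, ∫ t in a..s, (x - s) ^ (p - 1) * (s - t) ^ (q - 1) * d t := by
        simp only [rlI_of_ne_zero hp.ne', rlI_of_ne_zero hq.ne', mul_assoc,
          intervalIntegral.integral_const_mul, mul_left_comm _ (Gamma q)⁻¹]
    _ = rlI a (p + q) d x := by
        rw [hbeta, rlI_of_ne_zero (add_pos hp hq).ne']
        field_simp

/-! ### Continuity and differentiation of Riemann–Liouville integrals -/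

theorem rlI_eq_integral_unitInterval (hp : 0 < p) (hax : a ≤ x) :
    rlI a p d x = (Gamma p)⁻¹ *
      ((x - a) ^ p * ∫ t in (0 : ℝ)..1, (1 - t) ^ (p - 1) * d ((x - a) * t + a)) := by
  rw [rlI_of_ne_zero hp.ne']
  rcases hax.eq_or_lt with rfl | hax
  · simp [zero_rpow hp.ne']
  have hlen : 0 < x - a := sub_pos.2 hax
  have hsubst := intervalIntegral.integral_comp_mul_add (a := 0) (b := 1)
    (fun t => (x - t) ^ (p - 1) * d t) hlen.ne' a
  have hscale : ∫ t in (0 : ℝ)..1, (x - ((x - a) * t + a)) ^ (p - 1) * d ((x - a) * t + a) =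
      (x - a) ^ (p - 1) * ∫ t in (0 : ℝ)..1, (1 - t) ^ (p - 1) * d ((x - a) * t + a) := by
    rw [← intervalIntegral.integral_const_mul]
    refine intervalIntegral.integral_congr fun t ht => ?_
    rw [uIcc_of_le zero_le_one] at ht
    have hfactor : x - ((x - a) * t + a) = (x - a) * (1 - t) := by ring
    simp only [hfactor, mul_rpow hlen.le (sub_nonneg.2 ht.2), mul_assoc]
  simp only [hscale, mul_zero, zero_add, mul_one, sub_add_cancel, smul_eq_mul] at hsubst
  rw [← mul_inv_cancel_left₀ hlen.ne' (∫ t in a..x, _), ← hsubst, rpow_sub_one hlen.ne']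
  field_simp

theorem continuousOn_rlI (hp : 0 ≤ p) (hd : ContinuousOn d (Ico a b)) :
    ContinuousOn (rlI a p d) (Ico a b) := by
  rcases hp.eq_or_lt with rfl | hp
  · rwa [rlI_zero_order]
  have hmem : ∀ y, a ≤ y → ∀ t ∈ Ioc (0 : ℝ) 1, (y - a) * t + a ∈ Icc a y := fun y hy t ht =>
    ⟨by nlinarith [ht.1], by nlinarith [ht.2]⟩
  refine ContinuousOn.congr (continuousOn_const.mul (ContinuousOn.mul ?_ ?_))
    fun y hy => rlI_eq_integral_unitInterval hp hy.1
  · exact (continuousOn_id.sub continuousOn_const).rpow_const fun _ _ => Or.inr hp.le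
  intro y hy
  obtain ⟨c, hyc, hcb⟩ := exists_between hy.2
  obtain ⟨M, hM⟩ := isCompact_Icc.exists_bound_of_continuousOn
    (hd.mono (Icc_subset_Ico_right hcb))
  refine intervalIntegral.continuousWithinAt_of_dominated_interval
    (bound := fun t => (1 - t) ^ (p - 1) * M) ?_ ?_
    ((intervalIntegrable_sub_rpow hp).mul_const M) ?_ <;> rw [uIoc_of_le zero_le_one]
  · filter_upwards [self_mem_nhdsWithin] with z hz
    refine (by fun_prop : Measurable fun t : ℝ => (1 - t) ^ (p - 1)).aestronglyMeasurable.mul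
      (ContinuousOn.aestronglyMeasurable (hd.comp (by fun_prop) fun t ht => ?_) measurableSet_Ioc)
    exact Icc_subset_Ico_right hz.2 (hmem z hz.1 t ht)
  · filter_upwards [self_mem_nhdsWithin, mem_nhdsWithin_of_mem_nhds (Iio_mem_nhds hyc)]
      with z hz hzc
    refine Filter.Eventually.of_forall fun t ht => ?_
    have hpow := rpow_nonneg (sub_nonneg.2 ht.2) (p - 1)
    rw [norm_mul, norm_of_nonneg hpow]
    exact mul_le_mul_of_nonneg_left
      (hM _ (Icc_subset_Icc_right (le_of_lt hzc) (hmem z hz.1 t ht))) hpow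
  · refine Filter.Eventually.of_forall fun t ht => continuousWithinAt_const.mul ?_
    have hmaps : MapsTo (fun z => (z - a) * t + a) (Ico a b) (Ico a b) := fun z hz =>
      Icc_subset_Ico_right hz.2 (hmem z hz.1 t ht)
    exact (hd.comp (by fun_prop) hmaps) y hy

theorem hasDerivAt_rlI_add_one (hp : 0 ≤ p) (hd : ContinuousOn d (Ico a b)) (hx : x ∈ Ioo a b) :
    HasDerivAt (rlI a (p + 1) d) (rlI a p d x) x := by
  have hcont := continuousOn_rlI hp hd
  have hprimitive : rlI a (p + 1) d =ᶠ[nhds x] fun y => ∫ t in a..y, rlI a p d t := by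
    filter_upwards [Ioo_mem_nhds hx.1 hx.2] with y hy
    rw [← rlI_one, rlI_rlI zero_le_one hp hy.1.le (hd.mono (Icc_subset_Ico_right hy.2)),
      add_comm]
  refine HasDerivAt.congr_of_eventuallyEq ?_ hprimitive
  refine intervalIntegral.integral_hasDerivAt_right ?_ ?_
    (hcont.continuousAt (Ico_mem_nhds hx.1 hx.2))
  · apply ContinuousOn.intervalIntegrable
    rw [uIcc_of_le hx.1.le]
    exact hcont.mono (Icc_subset_Ico_right hx.2)
  · exact (hcont.mono Ioo_subset_Ico_self).stronglyMeasurableAtFilter isOpen_Ioo x hx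

theorem eq_rlI_one_derivWithin_add (hf : ContDiffOn ℝ 1 f (Ico a b)) (hx : x ∈ Ico a b) :
    f x = rlI a 1 (derivWithin f (Ico a b)) x + f a := by
  have hsub : Icc a x ⊆ Ico a b := Icc_subset_Ico_right hx.2
  have hderiv : ∀ t ∈ Ioo a x, HasDerivAt f (derivWithin f (Ico a b) t) t := fun t ht =>
    (hf.differentiableOn one_ne_zero t (hsub (Ioo_subset_Icc_self ht))).hasDerivWithinAt.hasDerivAt
      (Ico_mem_nhds ht.1 (ht.2.trans hx.2))
  have hint : IntervalIntegrable (derivWithin f (Ico a b)) volume a x :=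
    ((hf.continuousOn_derivWithin (uniqueDiffOn_Ico a b) le_rfl).mono
      hsub).intervalIntegrable_of_Icc hx.1
  rw [rlI_one, intervalIntegral.integral_eq_sub_of_hasDerivAt_of_le hx.1
    (hf.continuousOn.mono hsub) hderiv hint, sub_add_cancel]

theorem rlI_eq_rlI_derivWithin_add (hp : 0 ≤ p) (hf : ContDiffOn ℝ 1 f (Ico a b))
    (hx : x ∈ Ioo a b) :
    rlI a p f x =
      rlI a (p + 1) (derivWithin f (Ico a b)) x + f a * ((x - a) ^ p / Gamma (p + 1)) := by
  rcases hp.eq_or_lt with rfl | hp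
  · simpa [rlI_zero_order] using eq_rlI_one_derivWithin_add hf (Ioo_subset_Ico_self hx)
  have hf' := hf.continuousOn_derivWithin (uniqueDiffOn_Ico a b) le_rfl
  have hsub : Icc a x ⊆ Ico a b := Icc_subset_Ico_right hx.2
  have hconst : rlI a p (fun _ => f a) x = f a * ((x - a) ^ p / Gamma (p + 1)) := by
    simpa [← rlI_const_mul] using
      congrArg (f a * ·) (rlI_sub_rpow hp.le one_pos hx.1)
  rw [rlI_congr hx.1 fun t ht =>
      eq_rlI_one_derivWithin_add hf (hsub (Ioc_subset_Icc_self ht)),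
    rlI_add
      (intervalIntegrable_sub_rpow_mul hp hx.1.le ((continuousOn_rlI zero_le_one hf').mono hsub))
      (intervalIntegrable_sub_rpow_mul hp hx.1.le continuousOn_const),
    rlI_rlI hp.le zero_le_one hx.1.le (hf'.mono hsub), hconst]

/-- At `p = 0` the boundary term vanishes because `Gamma 0 = 0`, in agreement with the entire
function `1 / Γ`. -/
theorem hasDerivAt_rlI (hp : 0 ≤ p) (hf : ContDiffOn ℝ 1 f (Ico a b)) (hx : x ∈ Ioo a b) :
    HasDerivAt (rlI a p f)
      (rlI a p (derivWithin f (Ico a b)) x + f a * ((x - a) ^ (p - 1) / Gamma p)) x := by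
  have hf' := hf.continuousOn_derivWithin (uniqueDiffOn_Ico a b) le_rfl
  have hpow : HasDerivAt (fun y => (y - a) ^ p / Gamma (p + 1))
      ((x - a) ^ (p - 1) / Gamma p) x := by
    refine ((((hasDerivAt_id x).sub_const a).rpow_const
      (Or.inl (sub_pos.2 hx.1).ne')).div_const _).congr_deriv ?_
    rcases hp.eq_or_lt with rfl | hp
    · simp [Gamma_zero]
    · rw [Gamma_add_one hp.ne', one_mul, mul_div_mul_left _ _ hp.ne', id]
  refine ((hasDerivAt_rlI_add_one hp hf' hx).add (hpow.const_mul (f a))).congr_of_eventuallyEq ?_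
  filter_upwards [Ioo_mem_nhds hx.1 hx.2] with y hy
  exact rlI_eq_rlI_derivWithin_add hp hf hy

/-! ### Hilfer and Riemann–Liouville derivatives -/

theorem rlI_deriv_rlI (hp : 0 ≤ p) (hq : 0 < q) (hf : ContDiffOn ℝ 1 f (Ico a b))
    (hx : x ∈ Ioo a b) :
    rlI a q (deriv (rlI a p f)) x =
      deriv (rlI a (p + q) f) x - rlI a p f a * ((x - a) ^ (q - 1) / Gamma q) := by
  have hf' := hf.continuousOn_derivWithin (uniqueDiffOn_Ico a b) le_rfl
  have hsub : Icc a x ⊆ Ico a b := Icc_subset_Ico_right hx.2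
  rw [rlI_congr hx.1 fun t ht => (hasDerivAt_rlI hp hf ⟨ht.1, ht.2.trans_lt hx.2⟩).deriv,
    (hasDerivAt_rlI (by positivity) hf hx).deriv]
  rcases hp.eq_or_lt with rfl | hp
  · simp [rlI_zero_order, Gamma_zero]
  have hkernel : IntervalIntegrable
      (fun t => (x - t) ^ (q - 1) * (f a * ((t - a) ^ (p - 1) / Gamma p))) volume a x :=
    ((intervalIntegrable_sub_rpow_mul_sub_rpow hq hp hx.1).const_mul (f a / Gamma p)).congr
      fun t _ => by ring
  rw [rlI_add (intervalIntegrable_sub_rpow_mul hq hx.1.le ((continuousOn_rlI hp.le hf').mono hsub))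
      hkernel, rlI_rlI hq.le hp.le hx.1.le (hf'.mono hsub), rlI_const_mul,
    rlI_sub_rpow hq.le hp hx.1, rlI_base hp.ne', zero_mul, sub_zero, add_comm q p]

theorem rlI_deriv_rlI_rlI_add_one {r : ℝ} (hp : 0 ≤ p) (hq : 0 ≤ q) (hr : 0 ≤ r)
    (hg : ContinuousOn g (Ico a b)) (hx : x ∈ Ioo a b) :
    rlI a q (deriv (rlI a p (rlI a (r + 1) g))) x = rlI a (p + q + r) g x := by
  have hderiv : EqOn (deriv (rlI a p (rlI a (r + 1) g))) (rlI a (p + r) g) (Ioc a x) := by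
    intro t ht
    have htb : t < b := ht.2.trans_lt hx.2
    refine ((hasDerivAt_rlI_add_one (by positivity) hg ⟨ht.1, htb⟩).congr_of_eventuallyEq
      ?_).deriv
    filter_upwards [Ioo_mem_nhds ht.1 htb] with y hy
    rw [rlI_rlI hp (by positivity) hy.1.le (hg.mono (Icc_subset_Ico_right hy.2)), add_assoc]
  rw [rlI_congr hx.1 hderiv, rlI_rlI hq (by positivity) hx.1.le
    (hg.mono (Icc_subset_Ico_right hx.2)), add_left_comm, add_assoc]

theorem hilD_eq_rlD_sub {α β : ℝ} (hα0 : 0 < α) (hα1 : α < 1) (hβ0 : 0 < β) (hβ1 : β ≤ 1)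
    (hf : ContDiffOn ℝ 1 f (Ico a b)) (hx : x ∈ Ioo a b) :
    hilD a α β f x = rlD a α f x -
      rlI a ((1 - β) * (1 - α)) f a *
        ((x - a) ^ (-(α + (1 - β) * (1 - α))) / Gamma (β * (1 - α))) := by
  have hξ : 0 ≤ (1 - β) * (1 - α) := mul_nonneg (sub_nonneg.2 hβ1) (sub_nonneg.2 hα1.le)
  have horder : (1 - β) * (1 - α) + β * (1 - α) = 1 - α := by ring
  have hexponent : β * (1 - α) - 1 = -(α + (1 - β) * (1 - α)) := by ring
  have h := rlI_deriv_rlI hξ (mul_pos hβ0 (sub_pos.2 hα1)) hf hx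
  rw [horder, hexponent] at h
  rw [rlD, if_neg hα0.not_ge]
  exact h

theorem hilD_rlI_add_one {α β : ℝ} {n : ℕ} (hα1 : α < 1) (hβ0 : 0 ≤ β) (hβ1 : β ≤ 1)
    (hg : ContinuousOn g (Ico a b)) (hx : x ∈ Ioo a b) :
    hilD a α β (rlI a (n + 1) g) x = rlD a (α - (n + 1)) g x := by
  have hα : 0 ≤ 1 - α := sub_nonneg.2 hα1.le
  have hn : (0 : ℝ) ≤ n := n.cast_nonneg
  have horder : (1 - β) * (1 - α) + β * (1 - α) + n = -(α - (n + 1)) := by ring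
  rw [rlD, if_pos (by linarith), ← horder]
  exact rlI_deriv_rlI_rlI_add_one (mul_nonneg (sub_nonneg.2 hβ1) hα) (mul_nonneg hβ0 hα) hn hg hx

/-! ### Expansion of a fractional integral along a power series -/

theorem genBinom_zero (γ : ℝ) : genBinom γ 0 = 1 := by
  simp [genBinom]

theorem genBinom_succ (γ : ℝ) (n : ℕ) :
    genBinom γ (n + 1) = γ / (n + 1) * genBinom (γ - 1) n := by
  have hprod : ∏ i ∈ Finset.range n, (γ - ((i + 1 : ℕ) : ℝ)) =
      ∏ i ∈ Finset.range n, (γ - 1 - i) :=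
    Finset.prod_congr rfl fun i _ => by push_cast; ring
  rw [genBinom, genBinom, Finset.prod_range_succ', hprod, Nat.factorial_succ]
  push_cast
  field_simp
  ring

theorem rlI_sub_mul (c : ℝ) (hp : 0 < p) (hax : a ≤ x) (hd : ContinuousOn d (Icc a x)) :
    rlI a p (fun t => (t - c) * d t) x = (x - c) * rlI a p d x - p * rlI a (p + 1) d x := by
  have hkernel : ∫ t in a..x, (x - t) ^ (p - 1) * ((t - c) * d t) =
      ∫ t in a..x, ((x - c) * ((x - t) ^ (p - 1) * d t) - (x - t) ^ p * d t) := by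
    refine intervalIntegral.integral_congr fun t ht => ?_
    rw [uIcc_of_le hax] at ht
    have hpow : (x - t) ^ p = (x - t) ^ (p - 1) * (x - t) := by
      rw [← rpow_add_one' (sub_nonneg.2 ht.2) (by simpa using hp.ne'), sub_add_cancel]
    simp only [hpow]
    ring
  have := intervalIntegrable_sub_rpow_mul (add_pos hp one_pos) hax hd
  rw [add_sub_cancel_right] at this
  have hΓ := (Gamma_pos_of_pos hp).ne'
  rw [rlI_of_ne_zero hp.ne', rlI_of_ne_zero hp.ne', rlI_of_ne_zero (by positivity), hkernel,
    intervalIntegral.integral_sub ((intervalIntegrable_sub_rpow_mul hp hax hd).const_mul _) this,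
    intervalIntegral.integral_const_mul, Gamma_add_one hp.ne', add_sub_cancel_right]
  field_simp

theorem rlI_sub_pow_mul (hp : 0 < p) (hax : a ≤ x) (hg : ContinuousOn g (Icc a x)) (m : ℕ) :
    rlI a p (fun t => (t - x) ^ m * g t) x =
      genBinom (-p) m * m.factorial * rlI a (p + m) g x := by
  induction m generalizing p with
  | zero => simp [genBinom_zero]
  | succ m ih =>
    have hcont : ContinuousOn (fun t => (t - x) ^ m * g t) (Icc a x) := by fun_prop
    have horder : p + 1 + m = p + ↑(m + 1) := by push_cast; ring
    simp only [pow_succ', mul_assoc, rlI_sub_mul x hp hax hcont, sub_self, zero_mul, zero_sub,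
      ih (add_pos hp one_pos), horder, genBinom_succ, Nat.factorial_succ, neg_add']
    push_cast
    field_simp

theorem hasSum_rlI_mul {c : ℕ → ℝ} (hp : 0 < p) (hax : a ≤ x) (hg : ContinuousOn g (Icc a x))
    (hu : ∀ t ∈ Icc a x, HasSum (fun m => c m * (t - x) ^ m) (u t)) :
    HasSum (fun m : ℕ => c m * (genBinom (-p) m * m.factorial * rlI a (p + m) g x))
      (rlI a p (fun t => u t * g t) x) := by
  obtain ⟨M, hM⟩ := isCompact_Icc.exists_bound_of_continuousOn hg
  have hsummable : Summable fun m => |c m| * (x - a) ^ m :=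
    (hu a (left_mem_Icc.2 hax)).summable.abs.congr fun m => by
      rw [abs_mul, abs_pow, abs_sub_comm, abs_of_nonneg (sub_nonneg.2 hax)]
  have hsum : HasSum (fun m => ∫ t in a..x, (x - t) ^ (p - 1) * (c m * ((t - x) ^ m * g t)))
      (∫ t in a..x, (x - t) ^ (p - 1) * (u t * g t)) := by
    refine intervalIntegral.hasSum_integral_of_dominated_convergence
      (fun m t => |c m| * (x - a) ^ m * ((x - t) ^ (p - 1) * M)) (fun m => ?_) (fun m => ?_)
      ?_ ?_ ?_
    · rw [uIoc_of_le hax]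
      exact (by fun_prop : Measurable fun t : ℝ => (x - t) ^ (p - 1)).aestronglyMeasurable.mul
        (ContinuousOn.aestronglyMeasurable (by have := hg.mono Ioc_subset_Icc_self; fun_prop)
          measurableSet_Ioc)
    · rw [uIoc_of_le hax]
      refine Filter.Eventually.of_forall fun t ht => ?_
      have hxt := sub_nonneg.2 ht.2
      have hdist : |t - x| ≤ x - a := by
        rw [abs_sub_comm, abs_of_nonneg hxt]
        linarith [ht.1]
      have hgt := hM t (Ioc_subset_Icc_self ht)
      calc ‖(x - t) ^ (p - 1) * (c m * ((t - x) ^ m * g t))‖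
          = |c m| * |t - x| ^ m * ((x - t) ^ (p - 1) * ‖g t‖) := by
            simp only [norm_mul, norm_pow, norm_eq_abs, abs_of_nonneg (rpow_nonneg hxt _)]
            ring
        _ ≤ |c m| * (x - a) ^ m * ((x - t) ^ (p - 1) * M) := by gcongr
    · exact Filter.Eventually.of_forall fun t _ => hsummable.mul_right _
    · simp only [tsum_mul_right]
      exact ((intervalIntegrable_sub_rpow hp).mul_const M).const_mul _
    · rw [uIoc_of_le hax]
      refine Filter.Eventually.of_forall fun t ht => HasSum.mul_left _ ?_
      simpa only [mul_assoc] using (hu t (Ioc_subset_Icc_self ht)).mul_right (g t)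
  simpa only [← rlI_of_ne_zero hp.ne', rlI_const_mul, rlI_sub_pow_mul hp hax hg] using
    hsum.mul_left (Gamma p)⁻¹

/-! ### Leibniz rules -/

theorem hasDerivAt_rlI_mul {D : ℝ} (hp : 0 < p) (hf : ContinuousOn f (Ico a b))
    (hfx : DifferentiableAt ℝ f x) (hg : ContinuousOn g (Ico a b)) (hx : x ∈ Ioo a b)
    (hD : HasDerivAt (rlI a p g) D x) :
    HasDerivAt (rlI a p (fun t => f t * g t))
      (f x * D + (1 - p) * rlI a p (fun t => dslope f x t * g t) x) x := by
  set d : ℝ → ℝ := fun t => dslope f x t * g t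
  have hx' : Ico a b ∈ nhds x := Ico_mem_nhds hx.1 hx.2
  have hd : ContinuousOn d (Ico a b) := ((continuousOn_dslope hx').2 ⟨hf, hfx⟩).mul hg
  have hsplit : (fun t => f t * g t) = fun t => f x * g t + (t - x) * d t := by
    funext t
    linear_combination -g t * sub_smul_dslope f x t
  have hlocal : rlI a p (fun t => f t * g t) =ᶠ[nhds x] fun y =>
      f x * rlI a p g y + ((y - x) * rlI a p d y - p * rlI a (p + 1) d y) := by
    filter_upwards [Ioo_mem_nhds hx.1 hx.2] with y hy
    have hsub : Icc a y ⊆ Ico a b := Icc_subset_Ico_right hy.2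
    have hgy : ContinuousOn (fun t => f x * g t) (Icc a y) := (hg.mono hsub).const_mul (f x)
    have hdy : ContinuousOn (fun t => (t - x) * d t) (Icc a y) := by
      have := hd.mono hsub
      fun_prop
    rw [hsplit, rlI_add (intervalIntegrable_sub_rpow_mul hp hy.1.le hgy)
        (intervalIntegrable_sub_rpow_mul hp hy.1.le hdy),
      rlI_const_mul, rlI_sub_mul x hp hy.1.le (hd.mono hsub)]
  have hproduct : HasDerivAt (fun y => (y - x) * rlI a p d y) (rlI a p d x) x := by
    rw [hasDerivAt_iff_tendsto_slope]
    refine (((continuousOn_rlI hp.le hd).continuousAt hx').tendsto.mono_left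
      nhdsWithin_le_nhds).congr' ?_
    filter_upwards [self_mem_nhdsWithin] with y hy
    have := sub_ne_zero.2 hy
    simp only [slope_def_field, sub_self, zero_mul, sub_zero]
    field_simp
  refine (((hD.const_mul (f x)).add (hproduct.sub
    ((hasDerivAt_rlI_add_one hp.le hd hx).const_mul p))).congr_of_eventuallyEq
    hlocal).congr_deriv ?_
  ring

theorem hasSum_iteratedDeriv_mul_sub_pow {P : FormalMultilinearSeries ℝ ℝ ℝ} {r : ENNReal}
    (hf : HasFPowerSeriesOnBall f P x r) (hy : y ∈ Metric.eball x r) :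
    HasSum (fun n => iteratedDeriv n f x / n.factorial * (y - x) ^ n) (f y) := by
  have hsum := hf.hasSum_iteratedFDeriv (y := y - x) (by simpa [edist_eq_enorm_sub] using hy)
  rw [add_sub_cancel] at hsum
  refine hsum.congr_fun fun n => ?_
  simp only [iteratedFDeriv_apply_eq_iteratedDeriv_mul_prod, Finset.prod_const, Finset.card_univ,
    Fintype.card_fin, smul_eq_mul]
  ring

theorem hasSum_dslope {P : FormalMultilinearSeries ℝ ℝ ℝ} {r : ENNReal}
    (hf : HasFPowerSeriesOnBall f P x r) (hy : y ∈ Metric.eball x r) :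
    HasSum (fun n => iteratedDeriv (n + 1) f x / (n + 1).factorial * (y - x) ^ n)
      (dslope f x y) := by
  rcases eq_or_ne y x with rfl | hyx
  · simpa using hasSum_single
      (f := fun n => iteratedDeriv (n + 1) f y / (n + 1).factorial * (y - y) ^ n) 0
      fun n hn => by simp [hn]
  have hyx : y - x ≠ 0 := sub_ne_zero.2 hyx
  have htail := (hasSum_nat_add_iff' 1).2 (hasSum_iteratedDeriv_mul_sub_pow hf hy)
  have hslope : dslope f x y = (y - x)⁻¹ * (f y - f x) := by
    rw [← sub_smul_dslope, smul_eq_mul, inv_mul_cancel_left₀ hyx]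
  rw [hslope]
  refine HasSum.congr_fun (by simpa using htail.mul_left (y - x)⁻¹) fun n => ?_
  field_simp
  ring

theorem hasSum_rlD_mul {P : FormalMultilinearSeries ℝ ℝ ℝ} {r : ENNReal} {α : ℝ}
    (hα0 : 0 < α) (hα1 : α < 1) (hf : HasFPowerSeriesOnBall f P x r)
    (hball : Ico a b ⊆ Metric.eball x r) (hg : ContinuousOn g (Ico a b)) (hx : x ∈ Ioo a b)
    (hdiff : DifferentiableAt ℝ (rlI a (1 - α) g) x) :
    HasSum (fun m : ℕ => genBinom α m * iteratedDeriv m f x * rlD a (α - m) g x)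
      (rlD a α (fun t => f t * g t) x) := by
  have hsub : Icc a x ⊆ Ico a b := Icc_subset_Ico_right hx.2
  have hproduct : rlD a α (fun t => f t * g t) x =
      α * rlI a (1 - α) (fun t => dslope f x t * g t) x + f x * rlD a α g x := by
    rw [rlD, rlD, if_neg hα0.not_ge, if_neg hα0.not_ge]
    refine (hasDerivAt_rlI_mul (sub_pos.2 hα1) (hf.continuousOn.mono hball)
      hf.analyticAt.differentiableAt hg hx hdiff.hasDerivAt).deriv.trans ?_
    ring
  have hseries := (hasSum_rlI_mul (sub_pos.2 hα1) hx.1.le (hg.mono hsub)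
    fun t ht => hasSum_dslope hf (hball (hsub ht))).mul_left α
  rw [hproduct, ← hasSum_nat_add_iff' 1]
  simp only [Finset.sum_range_one, genBinom_zero, iteratedDeriv_zero, Nat.cast_zero, sub_zero,
    one_mul, add_sub_cancel_right]
  refine hseries.congr_fun fun m => ?_
  have horder : -(α - (m + 1 : ℕ)) = 1 - α + m := by push_cast; ring
  rw [rlD, if_pos (by push_cast; linarith [m.cast_nonneg (α := ℝ)]), horder, genBinom_succ,
    neg_sub, Nat.factorial_succ]
  push_cast
  field_simp

theorem hasSum_hilD_rlI {P : FormalMultilinearSeries ℝ ℝ ℝ} {r : ENNReal} {α β : ℝ}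
    (hα0 : 0 < α) (hα1 : α < 1) (hβ0 : 0 < β) (hβ1 : β ≤ 1)
    (hf : HasFPowerSeriesOnBall f P x r) (hball : Ico a b ⊆ Metric.eball x r)
    (hg : ContDiffOn ℝ 1 g (Ico a b)) (hx : x ∈ Ioo a b) :
    HasSum (fun m : ℕ => genBinom α m * iteratedDeriv m f x * hilD a α β (rlI a m g) x)
      (rlD a α (fun t => f t * g t) x - f x * (rlI a ((1 - β) * (1 - α)) g a *
        ((x - a) ^ (-(α + (1 - β) * (1 - α))) / Gamma (β * (1 - α))))) := by
  have hrl := hasSum_rlD_mul hα0 hα1 hf hball hg.continuousOn hx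
    (hasDerivAt_rlI (sub_nonneg.2 hα1.le) hg hx).differentiableAt
  refine (hrl.sub (hasSum_ite_eq (0 : ℕ) _)).congr_fun fun m => ?_
  rcases m with _ | m
  · simp [rlI_zero_order, genBinom_zero, hilD_eq_rlD_sub hα0 hα1 hβ0 hβ1 hg hx, mul_sub]
  · have hhil := hilD_rlI_add_one (n := m) hα1 hβ0.le hβ1 hg.continuousOn hx
    simp [hhil]

theorem hasSum_hilD_boundary (a α β x : ℝ) (f g : ℝ → ℝ) (hα1 : α < 1) (hβ1 : β ≤ 1) :
    HasSum (fun k : ℕ =>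
        genBinom (-((1 - β) * (1 - α))) k * rlI a ((1 - β) * (1 - α) + k) g a *
          (iteratedDeriv k f x - iteratedDeriv k f a) *
          (x - a) ^ (-(α + (1 - β) * (1 - α))) / Gamma (β * (1 - α)))
      ((f x - f a) * (rlI a ((1 - β) * (1 - α)) g a *
        ((x - a) ^ (-(α + (1 - β) * (1 - α))) / Gamma (β * (1 - α))))) := by
  have hξ : 0 ≤ (1 - β) * (1 - α) := mul_nonneg (sub_nonneg.2 hβ1) (sub_nonneg.2 hα1.le)
  convert hasSum_single (0 : ℕ) fun k hk => ?_ using 1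
  · simp only [genBinom_zero, iteratedDeriv_zero, Nat.cast_zero, add_zero]
    ring
  · rw [rlI_base (add_pos_of_nonneg_of_pos hξ (Nat.cast_pos.2 (Nat.pos_of_ne_zero hk))).ne']
    simp

theorem leibniz_Hilfer_general {P : FormalMultilinearSeries ℝ ℝ ℝ} {r : ENNReal} {α β : ℝ}
    (hα0 : 0 < α) (hα1 : α < 1) (hβ0 : 0 < β) (hβ1 : β ≤ 1)
    (hf : HasFPowerSeriesOnBall f P x r) (hball : Ico a b ⊆ Metric.eball x r)
    (hg : ContDiffOn ℝ 1 g (Ico a b)) (hx : x ∈ Ioo a b) :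
    Summable (fun m : ℕ => genBinom α m * iteratedDeriv m f x *
        hilD a α β (fun y => rlI a (m : ℝ) g y) x) ∧
    Summable (fun k : ℕ =>
        genBinom (-((1 - β) * (1 - α))) k * rlI a ((1 - β) * (1 - α) + k) g a *
          (iteratedDeriv k f x - iteratedDeriv k f a) *
          (x - a) ^ (-(α + (1 - β) * (1 - α))) / Real.Gamma (β * (1 - α))) ∧
    hilD a α β (fun t => f t * g t) x =
      (∑' m : ℕ, genBinom α m * iteratedDeriv m f x *
        hilD a α β (fun y => rlI a (m : ℝ) g y) x) +
      ∑' k : ℕ,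
        genBinom (-((1 - β) * (1 - α))) k * rlI a ((1 - β) * (1 - α) + k) g a *
          (iteratedDeriv k f x - iteratedDeriv k f a) *
          (x - a) ^ (-(α + (1 - β) * (1 - α))) / Real.Gamma (β * (1 - α)) := by
  have hinterior := hasSum_hilD_rlI hα0 hα1 hβ0 hβ1 hf hball hg hx
  have hboundary := hasSum_hilD_boundary a α β x f g hα1 hβ1
  have hfg : ContDiffOn ℝ 1 (fun t => f t * g t) (Ico a b) :=
    (hf.analyticOnNhd.contDiffOn_of_completeSpace.mono hball).mul hg
  refine ⟨hinterior.summable, hboundary.summable, ?_⟩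
  rw [hinterior.tsum_eq, hboundary.tsum_eq, hilD_eq_rlD_sub hα0 hα1 hβ0 hβ1 hfg hx, rlI_mul_base]
  ring

theorem EntireReal.exists_hasFPowerSeriesOnBall (hf : EntireReal f) (x : ℝ) :
    ∃ P : FormalMultilinearSeries ℝ ℝ ℝ, HasFPowerSeriesOnBall f P x ⊤ := by
  obtain ⟨P, hP⟩ := hf
  exact ⟨P.changeOrigin x, by simpa using hP.changeOrigin (y := x) (by simp)⟩

theorem EntireReal.contDiff (hf : EntireReal f) {n : WithTop ℕ∞} : ContDiff ℝ n f := by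
  obtain ⟨P, hP⟩ := hf
  exact AnalyticOnNhd.contDiff fun y _ => hP.analyticOnNhd y (by simp)

end

/-- Leibniz type rule for the Hilfer fractional derivative; the Hilfer
derivative of order `α - m` is the Hilfer derivative of order `α` applied to the
Riemann–Liouville fractional integral of order `m`. -/
theorem leibniz_Hilfer
    (a b : ℝ) (hab : a < b) (α β : ℝ)
    (hα0 : 0 < α) (hα1 : α < 1) (hβ0 : 0 < β) (hβ1 : β ≤ 1)
    (f g : ℝ → ℝ) (hf : EntireReal f) (hg : EntireReal g)
    (x : ℝ) (hx : x ∈ Set.Ioo a b) :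
    Summable (fun m : ℕ => genBinom α m * iteratedDeriv m f x *
        hilD a α β (fun y => rlI a (m : ℝ) g y) x) ∧
    Summable (fun k : ℕ =>
        genBinom (-((1 - β) * (1 - α))) k * rlI a ((1 - β) * (1 - α) + k) g a *
          (iteratedDeriv k f x - iteratedDeriv k f a) *
          (x - a) ^ (-(α + (1 - β) * (1 - α))) / Real.Gamma (β * (1 - α))) ∧
    hilD a α β (fun t => f t * g t) x =
      (∑' m : ℕ, genBinom α m * iteratedDeriv m f x *
        hilD a α β (fun y => rlI a (m : ℝ) g y) x) +
      ∑' k : ℕ,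
        genBinom (-((1 - β) * (1 - α))) k * rlI a ((1 - β) * (1 - α) + k) g a *
          (iteratedDeriv k f x - iteratedDeriv k f a) *
          (x - a) ^ (-(α + (1 - β) * (1 - α))) / Real.Gamma (β * (1 - α)) := by
  obtain ⟨P, hP⟩ := hf.exists_hasFPowerSeriesOnBall x
  exact leibniz_Hilfer_general hα0 hα1 hβ0 hβ1 hP (by simp) hg.contDiff.contDiffOn hx
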